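/- Let s ≥ 1 and let F_1, …, F_t be finite nonempty families of continuous functions ℝ → ℝ, and let F be their (disjoint) union, such that any two distinct functions of F agree at no more than s points. Let C_i be the complexity of the lower envelope of F_i, and let C = C_1 + ⋯ + C_t. Then the complexity of the lower envelope of F is at most (C/t)·λ_s(3t); equivalently, t·M ≤ C·λ_s(3t), where M is the complexity of the lower envelope of F. (This is a precise form of the paper's bound O(λ_s(t)/t · C) for the lower envelope of t overlaid lower envelopes.) -/

import Mathlib

/-- The alternating list `a, b, a, b, …` of length `m`. -/
def altList {α : Type*} (a b : α) : ℕ → List α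
  | 0 => []
  | m + 1 => a :: altList b a m

/-- `S` is a Davenport–Schinzel sequence of order `s` on (at most) `n` symbols:
it uses at most `n` distinct symbols, no two adjacent elements are equal, and it
contains no alternating subsequence `a, b, a, b, …` of length `s + 2` for distinct
symbols `a, b`. -/
def IsDSSeq {α : Type*} [DecidableEq α] (n s : ℕ) (S : List α) : Prop :=
  S.toFinset.card ≤ n ∧ S.Chain' (· ≠ ·) ∧
    ∀ a b : α, a ≠ b → ¬ (altList a b (s + 2)).Sublist S

/-- `lambdaDS s n` is the maximum length `λ_s(n)` of a `DS(n, s)` sequence. -/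
noncomputable def lambdaDS (s n : ℕ) : ℕ :=
  sSup {m | ∃ S : List ℕ, IsDSSeq n s S ∧ S.length = m}

/-- The lower envelope of a family `G` of real functions: the pointwise infimum
(which is the pointwise minimum for a finite nonempty family). -/
noncomputable def lowerEnv (G : Finset (ℝ → ℝ)) : ℝ → ℝ :=
  fun x => sInf ((fun g => g x) '' (G : Set (ℝ → ℝ)))

/-- `EnvPartitionable G M` means that `ℝ` can be partitioned into `M` intervals on
each of which the lower envelope of `G` coincides with a single member of `G`. -/
def EnvPartitionable (G : Finset (ℝ → ℝ)) (M : ℕ) : Prop :=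
  ∃ I : Fin M → Set ℝ,
    (∀ j, (I j).OrdConnected) ∧
    (Pairwise fun j j' => Disjoint (I j) (I j')) ∧
    (⋃ j, I j) = Set.univ ∧
    ∀ j, ∃ g ∈ G, Set.EqOn (lowerEnv G) g (I j)

/-- The complexity of the lower envelope of `G`: the minimum number `M` such that
`ℝ` can be partitioned into `M` intervals on each of which the lower envelope of
`G` coincides with a single member of `G`. -/
noncomputable def envComplexity (G : Finset (ℝ → ℝ)) : ℕ :=
  sInf {M | EnvPartitionable G M}

open scoped Classical

/-!
On a family of continuous functions which pairwise agree at finitely many points, exactly one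
member is smallest immediately to the left of a given point `x`, and it also attains the minimum at
`x`. Whenever this member changes from `f` to `g`, the graphs of `f` and `g` cross in between. Hence
the members met from left to right form a Davenport–Schinzel sequence of order `s`, and the lower
envelope of `n` functions has at most `λ_s(n)` pieces.

For `t` envelopes with `C_1, …, C_t` pieces, let `r_i x` be the number of pieces of the `i`-th
envelope to the left of the one containing `x`. Then `∑ r_i ≤ C - t`, so that cutting `ℝ` whenever
`∑ r_i` passes a multiple of `t` yields at most `C / t` slabs. Inside a slab the sum increases by at
most `t - 1`, so at most `t + (t - 1)` functions appear on the `t` envelopes there, and the lower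
envelope of these has at most `λ_s(2t - 1) ≤ λ_s(3t)` pieces.
-/

section DavenportSchinzel

variable {α β : Type*}

theorem altList_map (φ : α → β) (a b : α) (m : ℕ) :
    (altList a b m).map φ = altList (φ a) (φ b) m := by
  induction m generalizing a b with
  | zero => rfl
  | succ m ih => rw [altList, List.map_cons, ih, altList]

theorem altList_sublist_altList (a b : α) {m n : ℕ} (h : m ≤ n) :
    (altList a b m).Sublist (altList a b n) := by
  induction m generalizing n a b with
  | zero => exact List.nil_sublist _
  | succ m ih =>
    obtain ⟨n, rfl⟩ := Nat.exists_eq_add_of_le' (Nat.zero_lt_of_lt h)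
    exact (ih b a (Nat.le_of_succ_le_succ h)).cons_cons a

theorem left_mem_altList (a b : α) (m : ℕ) : a ∈ altList a b (m + 2) :=
  List.mem_cons_self

theorem right_mem_altList (a b : α) (m : ℕ) : b ∈ altList a b (m + 2) :=
  List.mem_cons_of_mem a List.mem_cons_self

variable [DecidableEq α] [DecidableEq β]

-- Since `a ≠ b`, two occurrences of `(a, b)` as a pair of neighbours never overlap.
theorem altList_two_mul_count_sublist {a b : α} (hab : a ≠ b) :
    ∀ S : List α, (altList a b (2 * (S.zip S.tail).count (a, b))).Sublist S
  | [] => List.nil_sublist _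
  | [_] => List.nil_sublist _
  | x :: y :: S => by
    rw [List.tail_cons, List.zip_cons_cons, List.count_cons]
    split_ifs with hxy
    · obtain ⟨rfl, rfl⟩ : x = a ∧ y = b := by simpa using hxy
      have skip : ((y :: S).zip S).count (x, y) = (S.zip S.tail).count (x, y) := by
        cases S with
        | nil => rfl
        | cons z S => simp [hab.symm]
      rw [skip, mul_add]
      exact ((altList_two_mul_count_sublist hab S).cons_cons y).cons_cons x
    · exact (altList_two_mul_count_sublist hab (y :: S)).cons x

theorem count_zip_tail_diagonal {S : List α} (hS : S.IsChain (· ≠ ·)) (a : α) :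
    (S.zip S.tail).count (a, a) = 0 := by
  rw [List.count_eq_zero, List.mem_iff_getElem]
  rintro ⟨i, hi, h⟩
  simp only [List.getElem_zip, List.getElem_tail, Prod.mk.injEq] at h
  rw [List.length_zip, List.length_tail] at hi
  exact List.isChain_iff_getElem.1 hS i (by omega) (h.1.trans h.2.symm)

namespace IsDSSeq

variable {n s : ℕ} {S : List α}

theorem count_zip_tail_le (hS : IsDSSeq n s S) (p : α × α) :
    (S.zip S.tail).count p ≤ s + 1 := by
  obtain ⟨-, hchain, halt⟩ := hS
  obtain ⟨a, b⟩ := p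
  rcases eq_or_ne a b with rfl | hab
  · exact (count_zip_tail_diagonal hchain a).trans_le (Nat.zero_le _)
  · by_contra! hcount
    exact halt a b hab ((altList_sublist_altList a b (by omega)).trans
      (altList_two_mul_count_sublist hab S))

theorem length_le (hS : IsDSSeq n s S) : S.length ≤ n * n * (s + 1) + 1 := by
  have hpairs : (S.zip S.tail).toFinset ⊆ S.toFinset ×ˢ S.toFinset := by
    rintro ⟨a, b⟩ hab
    obtain ⟨ha, hb⟩ := List.of_mem_zip (List.mem_toFinset.1 hab)
    simp [ha, List.mem_of_mem_tail hb]
  have hzip : (S.zip S.tail).length ≤ n * n * (s + 1) := by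
    calc (S.zip S.tail).length
        = ∑ p ∈ (S.zip S.tail).toFinset, (S.zip S.tail).count p := by
          convert (List.sum_toFinset_count_eq_length (S.zip S.tail)).symm
      _ ≤ (S.zip S.tail).toFinset.card * (s + 1) :=
          Finset.sum_le_card_nsmul _ _ _ fun p _ => hS.count_zip_tail_le p
      _ ≤ (S.toFinset ×ˢ S.toFinset).card * (s + 1) := by gcongr
      _ ≤ n * n * (s + 1) := by
          rw [Finset.card_product]
          gcongr <;> exact hS.1
  rw [List.length_zip, List.length_tail] at hzip
  omega

theorem mono {n' : ℕ} (hn : n ≤ n') (hS : IsDSSeq n s S) : IsDSSeq n' s S :=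
  ⟨hS.1.trans hn, hS.2⟩

theorem map {φ : α → β} (hφ : Set.InjOn φ {x | x ∈ S}) (hS : IsDSSeq n s S) :
    IsDSSeq n s (S.map φ) := by
  obtain ⟨hcard, hchain, halt⟩ := hS
  refine ⟨?_, ?_, fun u v huv hsub => ?_⟩
  · have himage : (S.map φ).toFinset = S.toFinset.image φ := by ext; simp
    exact himage ▸ Finset.card_image_le.trans hcard
  · refine (List.isChain_map φ).2 (List.isChain_iff_getElem.2 fun i hi he => ?_)
    exact List.isChain_iff_getElem.1 hchain i hi
      (hφ (List.getElem_mem _) (List.getElem_mem _) he)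
  · obtain ⟨x, hx, rfl⟩ := List.mem_map.1 (hsub.subset (left_mem_altList u v s))
    obtain ⟨y, hy, rfl⟩ := List.mem_map.1 (hsub.subset (right_mem_altList _ v s))
    have : Nonempty α := ⟨x⟩
    have hinv := hφ.leftInvOn_invFunOn
    have hback := hsub.map (Function.invFunOn φ {x | x ∈ S})
    have hS : (S.map φ).map (Function.invFunOn φ {x | x ∈ S}) = S := by
      rw [List.map_map]
      exact (List.map_congr_left fun z hz => hinv hz).trans S.map_id
    rw [altList_map, hinv hx, hinv hy, hS] at hback
    exact halt x y (ne_of_apply_ne φ huv) hback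

end IsDSSeq

theorem bddAbove_length_isDSSeq (n s : ℕ) :
    BddAbove {m | ∃ S : List ℕ, IsDSSeq n s S ∧ S.length = m} := by
  refine ⟨n * n * (s + 1) + 1, ?_⟩
  rintro _ ⟨S, hS, rfl⟩
  exact hS.length_le

theorem IsDSSeq.length_le_lambdaDS {n s : ℕ} {S : List α} (hS : IsDSSeq n s S) :
    S.length ≤ lambdaDS s n := by
  have hinj : Set.InjOn (fun x => S.idxOf x) {x | x ∈ S} := fun x hx _ _ h =>
    (List.idxOf_inj hx).1 h
  exact le_csSup (bddAbove_length_isDSSeq n s) ⟨_, hS.map hinj, List.length_map _⟩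

theorem lambdaDS_mono (s : ℕ) : Monotone (lambdaDS s) := fun n n' hn =>
  csSup_le_csSup (bddAbove_length_isDSSeq n' s)
    ⟨0, [], ⟨by simp, List.isChain_nil, by simp [altList]⟩, rfl⟩
    fun _ ⟨S, hS, hlen⟩ => ⟨S, hS.mono hn, hlen⟩

end DavenportSchinzel

section SwitchChains

variable {X α : Type*} [LinearOrder X]

/-- A switch chain of `m`: a strictly increasing list of points along which consecutive values of
`m` differ. Bounding its length bounds the number of intervals on which `m` is constant. -/
def IsSwitchChain (m : X → α) (L : List X) : Prop :=
  L.IsChain fun x y => x < y ∧ m x ≠ m y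

namespace IsSwitchChain

variable {m : X → α} {L : List X} {x y : X}

theorem pairwise_lt (hL : IsSwitchChain m L) : L.Pairwise (· < ·) :=
  List.isChain_iff_pairwise.1 (hL.imp fun _ _ h => h.1)

theorem isChain_map_ne (hL : IsSwitchChain m L) : (L.map m).IsChain (· ≠ ·) :=
  (List.isChain_map m).2 (hL.imp fun _ _ h => h.2)

theorem cons_cons (hxy : x < y) (hm : m x ≠ m y) (hL : IsSwitchChain m (y :: L)) :
    IsSwitchChain m (x :: y :: L) :=
  List.isChain_cons_cons.2 ⟨⟨hxy, hm⟩, hL⟩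

theorem replace_head (hxy : x < y) (hm : m x = m y) (hL : IsSwitchChain m (y :: L)) :
    IsSwitchChain m (x :: L) := by
  cases L with
  | nil => exact List.isChain_singleton x
  | cons z L =>
    obtain ⟨⟨hyz, hne⟩, htail⟩ := List.isChain_cons_cons.1 hL
    exact cons_cons (hxy.trans hyz) (hm.trans_ne hne) htail

theorem nodup_map (hm : ∀ a, (m ⁻¹' {a}).OrdConnected) (hL : IsSwitchChain m L) :
    (L.map m).Nodup := by
  induction L with
  | nil => exact List.nodup_nil
  | cons x L ih =>
    refine List.nodup_cons.2 ⟨fun hmem => ?_, ih hL.tail⟩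
    obtain ⟨y, hy, hyx⟩ := List.mem_map.1 hmem
    cases L with
    | nil => exact List.not_mem_nil hy
    | cons z L =>
      obtain ⟨⟨hxz, hne⟩, htail⟩ := List.isChain_cons_cons.1 hL
      have hzy : z ≤ y := by
        rcases List.mem_cons.1 hy with rfl | hy
        · exact le_rfl
        · exact (List.rel_of_pairwise_cons (pairwise_lt htail) hy).le
      have hz : m z = m x := (hm (m x)).out rfl hyx ⟨hxz.le, hzy⟩
      exact hne hz.symm

end IsSwitchChain

-- The rank of `x` is determined by the longest switch chain starting at `x`.
theorem exists_monotone_factorsThrough {m : X → α} {N : ℕ}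
    (hN : ∀ L, IsSwitchChain m L → L.length ≤ N) :
    ∃ r : X → Fin N, Monotone r ∧ m.FactorsThrough r := by
  have hlongest (x : X) : ∃ L, IsSwitchChain m (x :: L) ∧
      ∀ L', IsSwitchChain m (x :: L') → L'.length ≤ L.length := by
    have hfin : (List.length '' {L | IsSwitchChain m (x :: L)}).Finite := by
      refine (Set.finite_Iic N).subset ?_
      rintro _ ⟨L, hL, rfl⟩
      exact (Nat.le_succ _).trans (hN _ hL)
    obtain ⟨L, hL, hmax⟩ :=
      Set.Finite.exists_maximalFor' _ _ hfin ⟨[], List.isChain_singleton x⟩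
    exact ⟨L, hL, fun L' hL' => (le_total _ _).elim (hmax hL') id⟩
  choose L hL hmax using hlongest
  have hle {x y : X} (hxy : x < y) : (L y).length ≤ (L x).length := by
    by_cases hm : m x = m y
    · exact hmax x _ ((hL y).replace_head hxy hm)
    · exact (Nat.le_succ _).trans (hmax x _ ((hL y).cons_cons hxy hm))
  have heq {x y : X} (hxy : x < y) (h : (L x).length = (L y).length) : m x = m y := by
    by_contra hm
    exact absurd (hmax x _ ((hL y).cons_cons hxy hm)) (by simp [h])
  refine ⟨fun x => Fin.rev ⟨(L x).length, hN _ (hL x)⟩, ?_, fun x y hxy => ?_⟩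
  · refine Fin.rev_anti.comp fun x y hxy => ?_
    rcases hxy.eq_or_lt with rfl | hxy
    · exact le_rfl
    · exact hle hxy
  · have hlen : (L x).length = (L y).length := congrArg Fin.val (Fin.rev_injective hxy)
    rcases lt_trichotomy x y with hlt | rfl | hlt
    · exact heq hlt hlen
    · rfl
    · exact (heq hlt hlen.symm).symm

theorem exists_monotone_factorsThrough_of_ordConnected [Fintype α] {m : X → α}
    (hm : ∀ a, (m ⁻¹' {a}).OrdConnected) {N : ℕ} (hN : Fintype.card α ≤ N) :
    ∃ r : X → Fin N, Monotone r ∧ m.FactorsThrough r :=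
  exists_monotone_factorsThrough fun _ hL =>
    (List.length_map m).symm.trans_le ((hL.nodup_map hm).length_le_card.trans hN)

end SwitchChains

section LeftMinimizers

open Filter Topology

variable {X Y : Type*} [ConditionallyCompleteLinearOrder X] [TopologicalSpace X]
  [OrderTopology X] [DenselyOrdered X] [NoMinOrder X]
  [LinearOrder Y] [TopologicalSpace Y] [OrderClosedTopology Y]

theorem eventually_lt_or_gt_nhdsLT {f g : X → Y} (hf : Continuous f) (hg : Continuous g)
    (hfg : {x | f x = g x}.Finite) (x : X) :
    (∀ᶠ y in 𝓝[<] x, f y < g y) ∨ ∀ᶠ y in 𝓝[<] x, g y < f y := by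
  have hne : ∀ᶠ y in 𝓝[<] x, f y ≠ g y :=
    nhdsLT_le_nhdsNE x (nhdsNE_le_cofinite x hfg.compl_mem_cofinite)
  obtain ⟨a, ha, hsub⟩ := mem_nhdsLT_iff_exists_Ioo_subset.1 hne
  obtain ⟨b, hb⟩ := exists_between (Set.mem_Iio.1 ha)
  refine (hsub hb).lt_or_gt.imp (fun hlt => ?_) fun hlt => ?_ <;>
    filter_upwards [Ioo_mem_nhdsLT ha] with y hy <;> by_contra! hle
  · obtain ⟨z, hz, h⟩ := isPreconnected_Ioo.intermediate_value₂ hb hy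
      hf.continuousOn hg.continuousOn hlt.le hle
    exact hsub hz h
  · obtain ⟨z, hz, h⟩ := isPreconnected_Ioo.intermediate_value₂ hb hy
      hg.continuousOn hf.continuousOn hlt.le hle
    exact hsub hz h.symm

/-- `IsLeftMin G x g` says that `g` is the member of `G` which is strictly smallest immediately to
the left of `x`. Unlike a minimizer at `x` itself, it is unique. -/
def IsLeftMin (G : Finset (X → Y)) (x : X) (g : X → Y) : Prop :=
  g ∈ G ∧ ∀ f ∈ G, f ≠ g → ∀ᶠ y in 𝓝[<] x, g y < f y

theorem exists_isLeftMin {G : Finset (X → Y)} (hG : G.Nonempty) (hcont : ∀ f ∈ G, Continuous f)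
    (hfin : (G : Set (X → Y)).Pairwise fun f g => {x | f x = g x}.Finite) (x : X) :
    ∃ g, IsLeftMin G x g := by
  have hpersist : ∀ᶠ y in 𝓝[<] x, ∀ g ∈ G, ∀ f ∈ G, f ≠ g → g y ≤ f y →
      ∀ᶠ z in 𝓝[<] x, g z < f z := by
    refine (eventually_all_finset G).2 fun g hg => (eventually_all_finset G).2 fun f hf => ?_
    rcases eq_or_ne f g with rfl | hfg
    · exact Eventually.of_forall fun y hne => absurd rfl hne
    · rcases eventually_lt_or_gt_nhdsLT (hcont f hf) (hcont g hg) (hfin hf hg hfg) x with h | h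
      · exact h.mono fun y hlt _ hle => absurd hlt hle.not_gt
      · exact Eventually.of_forall fun _ _ _ => h
  obtain ⟨y, hy⟩ := hpersist.exists
  obtain ⟨g, hg, hmin⟩ := G.exists_min_image (fun f => f y) hG
  exact ⟨g, hg, fun f hf hfg => hy g hg f hf hfg (hmin f hf)⟩

namespace IsLeftMin

variable {G : Finset (X → Y)} {f g : X → Y} {x y : X}

theorem apply_le (hcont : ∀ f ∈ G, Continuous f) (hg : IsLeftMin G x g) (hf : f ∈ G) :
    g x ≤ f x := by
  rcases eq_or_ne f g with rfl | hfg
  · exact le_rfl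
  · exact le_of_tendsto_of_tendsto ((hcont g hg.1).tendsto x |>.mono_left nhdsWithin_le_nhds)
      ((hcont f hf).tendsto x |>.mono_left nhdsWithin_le_nhds)
      ((hg.2 f hf hfg).mono fun _ => le_of_lt)

theorem exists_eq_mem_Ico (hcont : ∀ f ∈ G, Continuous f) (hf : IsLeftMin G x f)
    (hg : IsLeftMin G y g) (hfg : f ≠ g) (hxy : x < y) : ∃ z ∈ Set.Ico x y, f z = g z :=
  isPreconnected_Ico.intermediate_value₂_eventually₁ (Set.left_mem_Ico.2 hxy)
    (le_principal_iff.2 (Ico_mem_nhdsLT hxy)) (hcont f hf.1).continuousOn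
    (hcont g hg.1).continuousOn (hf.apply_le hcont hg.1)
    ((hg.2 f hf.1 hfg).mono fun _ => le_of_lt)

end IsLeftMin

variable {G : Finset (X → Y)} {m : X → X → Y}

theorem le_encard_setOf_eq_of_map_eq_altList (hcont : ∀ f ∈ G, Continuous f)
    (hm : ∀ x, IsLeftMin G x (m x)) {f g : X → Y} (hfg : f ≠ g) {k : ℕ} {x : X} {L : List X}
    (hL : (x :: L).Pairwise (· < ·)) (hmap : (x :: L).map m = altList f g (k + 1)) :
    (k : ℕ∞) ≤ {z | x ≤ z ∧ f z = g z}.encard := by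
  induction k generalizing f g x L with
  | zero => exact zero_le
  | succ k ih =>
    rcases L with _ | ⟨y, L⟩
    · simp [altList] at hmap
    · obtain ⟨hx, htail⟩ := List.cons.inj hmap
      have hy : m y = g := (List.cons.inj htail).1
      have hxy : x < y := List.rel_of_pairwise_cons hL List.mem_cons_self
      obtain ⟨z, ⟨hxz, hzy⟩, hz⟩ :=
        (hx ▸ hm x).exists_eq_mem_Ico hcont (hy ▸ hm y) hfg hxy
      calc ((k + 1 : ℕ) : ℕ∞) ≤ {w | y ≤ w ∧ g w = f w}.encard + 1 := by
            push_cast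
            gcongr
            exact ih hfg.symm hL.of_cons htail
        _ = (insert z {w | y ≤ w ∧ g w = f w}).encard :=
            (Set.encard_insert_of_notMem fun h => h.1.not_gt hzy).symm
        _ ≤ {w | x ≤ w ∧ f w = g w}.encard := by
            refine Set.encard_le_encard (Set.insert_subset ⟨hxz, hz⟩ ?_)
            exact fun w ⟨hyw, hw⟩ => ⟨hxy.le.trans hyw, hw.symm⟩

variable [DecidableEq (X → Y)]

theorem IsSwitchChain.isDSSeq_map {s : ℕ} (hcont : ∀ f ∈ G, Continuous f)
    (hagree : (G : Set (X → Y)).Pairwise fun f g => {x | f x = g x}.encard ≤ s)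
    (hm : ∀ x, IsLeftMin G x (m x)) {L : List X} (hL : IsSwitchChain m L) :
    IsDSSeq G.card s (L.map m) := by
  have hmG {f : X → Y} (hf : f ∈ L.map m) : f ∈ G := by
    obtain ⟨x, -, rfl⟩ := List.mem_map.1 hf
    exact (hm x).1
  refine ⟨Finset.card_le_card fun f hf => hmG (List.mem_toFinset.1 hf), hL.isChain_map_ne,
    fun f g hfg hsub => ?_⟩
  have hf : f ∈ G := hmG (hsub.subset (left_mem_altList f g s))
  have hg : g ∈ G := hmG (hsub.subset (right_mem_altList f g s))
  obtain ⟨L', hL', hmap⟩ := List.sublist_map_iff.1 hsub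
  rcases L' with _ | ⟨x, L'⟩
  · simp [altList] at hmap
  · have hcross := le_encard_setOf_eq_of_map_eq_altList hcont hm hfg
      (hL.pairwise_lt.sublist hL') hmap.symm
    have hle : ((s + 1 : ℕ) : ℕ∞) ≤ s :=
      (hcross.trans (Set.encard_le_encard fun z hz => hz.2)).trans (hagree hf hg hfg)
    exact absurd (ENat.natCast_le_natCast.1 hle) (Nat.not_succ_le_self s)

end LeftMinimizers

section LowerEnvelope

variable {G : Finset (ℝ → ℝ)}

/-- A selection of minimizers of `G`: at each `x`, the member `m x` of `G` attains the minimum of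
`G`. A partition of `ℝ` as in `EnvPartitionable` is one on whose pieces such an `m` is constant. -/
def IsMinSelection (G : Finset (ℝ → ℝ)) (m : ℝ → ℝ → ℝ) : Prop :=
  ∀ x, m x ∈ G ∧ ∀ f ∈ G, m x x ≤ f x

theorem lowerEnv_eq_iff {g : ℝ → ℝ} (hg : g ∈ G) {x : ℝ} :
    lowerEnv G x = g x ↔ ∀ f ∈ G, g x ≤ f x := by
  refine ⟨fun h f hf => ?_, fun h => ?_⟩
  · exact h ▸ csInf_le (G.finite_toSet.image _).bddBelow (Set.mem_image_of_mem _ hf)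
  · exact IsLeast.csInf_eq ⟨Set.mem_image_of_mem _ hg, Set.forall_mem_image.2 h⟩

theorem IsMinSelection.envPartitionable {m : ℝ → ℝ → ℝ} (hm : IsMinSelection G m) {ι : Type*}
    [Fintype ι] {c : ℝ → ι} (hc : ∀ k, (c ⁻¹' {k}).OrdConnected) (hmc : m.FactorsThrough c) :
    EnvPartitionable G (Fintype.card ι) := by
  let e := (Fintype.equivFin ι).symm
  refine ⟨fun j => c ⁻¹' {e j}, fun j => hc _, fun j j' hj => ?_, ?_, fun j => ?_⟩
  · exact Disjoint.preimage c (Set.disjoint_singleton.2 (e.injective.ne hj))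
  · exact Set.iUnion_eq_univ_iff.2 fun x => ⟨e.symm (c x), (e.apply_symm_apply _).symm⟩
  · rcases (c ⁻¹' {e j}).eq_empty_or_nonempty with hempty | ⟨y, hy⟩
    · exact ⟨m 0, (hm 0).1, (Set.eqOn_empty _ _).mono hempty.subset⟩
    · refine ⟨m y, (hm y).1, fun x hx => ?_⟩
      rw [← hmc (hx.trans hy.symm)]
      exact (lowerEnv_eq_iff (hm x).1).2 (hm x).2

theorem EnvPartitionable.envComplexity {M : ℕ} (hG : EnvPartitionable G M) :
    EnvPartitionable G (envComplexity G) :=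
  Nat.sInf_mem (s := {M | EnvPartitionable G M}) ⟨M, hG⟩

theorem EnvPartitionable.exists_isMinSelection {M : ℕ} (hG : EnvPartitionable G M) :
    ∃ (r : ℝ → Fin M) (m : ℝ → ℝ → ℝ),
      IsMinSelection G m ∧ Monotone r ∧ m.FactorsThrough r := by
  obtain ⟨I, hconn, hdisj, hcover, henv⟩ := hG
  choose g hg hgI using henv
  choose c hc using Set.iUnion_eq_univ_iff.1 hcover
  have hfiber (j : Fin M) : c ⁻¹' {j} = I j := by
    refine Set.Subset.antisymm (fun x hx => hx ▸ hc x) fun x hx => ?_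
    by_contra hne
    exact Set.disjoint_left.1 (hdisj hne) (hc x) hx
  obtain ⟨r, hr, hcr⟩ := exists_monotone_factorsThrough_of_ordConnected (m := c)
    (fun j => hfiber j ▸ hconn j) (Fintype.card_fin M).le
  exact ⟨r, g ∘ c, fun x => ⟨hg _, (lowerEnv_eq_iff (hg _)).1 (hgI _ (hc x))⟩, hr,
    hcr.comp_left g⟩

theorem envPartitionable_lambdaDS {s n : ℕ} (hne : G.Nonempty) (hcont : ∀ f ∈ G, Continuous f)
    (hagree : (G : Set (ℝ → ℝ)).Pairwise fun f g => {x | f x = g x}.encard ≤ s)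
    (hcard : G.card ≤ n) : EnvPartitionable G (lambdaDS s n) := by
  have hfin : (G : Set (ℝ → ℝ)).Pairwise fun f g => {x | f x = g x}.Finite :=
    hagree.imp fun _ _ h => Set.finite_of_encard_le_coe h
  choose m hm using exists_isLeftMin hne hcont hfin
  have hlength (L : List ℝ) (hL : IsSwitchChain m L) : L.length ≤ lambdaDS s n :=
    calc L.length = (L.map m).length := (List.length_map m).symm
      _ ≤ lambdaDS s n :=
        ((hL.isDSSeq_map hcont hagree hm).mono hcard).length_le_lambdaDS
  obtain ⟨r, hr, hmr⟩ := exists_monotone_factorsThrough hlength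
  have hsel : IsMinSelection G m := fun x => ⟨(hm x).1, fun f hf => (hm x).apply_le hcont hf⟩
  simpa using hsel.envPartitionable (fun k => Set.ordConnected_singleton.preimage_mono hr) hmr

theorem EnvPartitionable.glue {κ : Type*} [Fintype κ] {σ : ℝ → κ} {H : κ → Finset (ℝ → ℝ)} {N : ℕ}
    (hσ : ∀ k, (σ ⁻¹' {k}).OrdConnected) (hHG : ∀ k, H k ⊆ G)
    (hmin : ∀ x, ∀ f ∈ G, ∃ h ∈ H (σ x), h x ≤ f x) (hH : ∀ k, EnvPartitionable (H k) N) :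
    EnvPartitionable G (Fintype.card κ * N) := by
  choose r m hm hr hmr using fun k => (hH k).exists_isMinSelection
  have hsel : IsMinSelection G fun x => m (σ x) x := by
    refine fun x => ⟨hHG _ (hm _ x).1, fun f hf => ?_⟩
    obtain ⟨h, hh, hle⟩ := hmin x f hf
    exact ((hm (σ x) x).2 h hh).trans hle
  have hconn (p : κ × Fin N) : ((fun x => (σ x, r (σ x) x)) ⁻¹' {p}).OrdConnected := by
    have heq : (fun x => (σ x, r (σ x) x)) ⁻¹' {p} = σ ⁻¹' {p.1} ∩ r p.1 ⁻¹' {p.2} := by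
      ext x
      simp only [Set.mem_preimage, Set.mem_singleton_iff, Set.mem_inter_iff, Prod.ext_iff]
      exact and_congr_right fun h => h ▸ Iff.rfl
    exact heq ▸ (hσ p.1).inter (Set.ordConnected_singleton.preimage_mono (hr p.1))
  have hfactor : (fun x => m (σ x) x).FactorsThrough fun x => (σ x, r (σ x) x) := by
    intro x y hxy
    obtain ⟨hσxy, hrxy⟩ := Prod.ext_iff.1 hxy
    simp only at hσxy hrxy ⊢
    rw [hσxy] at hrxy ⊢
    exact hmr _ hrxy
  simpa using hsel.envPartitionable hconn hfactor

end LowerEnvelope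

section Slabs

variable {ι X α : Type*}

theorem encard_image_le_of_factorsThrough {m : X → α} {r : X → ℕ} (hmr : m.FactorsThrough r)
    {S : Set X} {a b : ℕ} (hS : Set.MapsTo r S (Set.Icc a b)) :
    (m '' S).encard ≤ (b + 1 - a : ℕ) := by
  rcases S.eq_empty_or_nonempty with rfl | ⟨x, -⟩
  · simp
  · have : Nonempty α := ⟨m x⟩
    obtain ⟨e, he⟩ := (Function.factorsThrough_iff m).1 hmr
    calc (m '' S).encard = (e '' (r '' S)).encard := by rw [he, Set.image_comp]
      _ ≤ (r '' S).encard := Set.encard_image_le _ _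
      _ ≤ (Set.Icc a b).encard := Set.encard_le_encard hS.image_subset
      _ = (b + 1 - a : ℕ) := by
        rw [← Finset.coe_Icc, Set.encard_coe_eq_coe_finsetCard, Nat.card_Icc]

variable [Fintype ι] [LinearOrder X]

theorem le_of_sum_le_sum_of_monotone {r : ι → X → ℕ} (hr : ∀ i, Monotone (r i)) {x y : X}
    (hxy : ∑ i, r i x ≤ ∑ i, r i y) (i : ι) : r i x ≤ r i y := by
  rcases le_total x y with hle | hle
  · exact hr i hle
  · have hterm : ∀ j ∈ Finset.univ, r j y ≤ r j x := fun j _ => hr j hle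
    have hsum : ∑ j, r j y = ∑ j, r j x := (Finset.sum_le_sum hterm).antisymm hxy
    exact ((Finset.sum_eq_sum_iff_of_le hterm).1 hsum i (Finset.mem_univ i)).ge

variable {m : ι → X → α}

theorem encard_iUnion_image_lt {r : ι → X → ℕ} (hr : ∀ i, Monotone (r i))
    (hmr : ∀ i, (m i).FactorsThrough (r i)) {S : Set X} (hS : S.Nonempty) {a w : ℕ}
    (hsum : ∀ x ∈ S, ∑ i, r i x ∈ Set.Ico a (a + w)) :
    (⋃ i, m i '' S).encard < (w + Fintype.card ι : ℕ) := by
  have hfin : ((fun x => ∑ i, r i x) '' S).Finite :=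
    (Set.finite_Ico a (a + w)).subset (Set.image_subset_iff.2 hsum)
  obtain ⟨x, hxS, hx⟩ := Set.Finite.exists_minimalFor' _ S hfin hS
  obtain ⟨y, hyS, hy⟩ := Set.Finite.exists_maximalFor' _ S hfin hS
  have hmaps (i : ι) : Set.MapsTo (r i) S (Set.Icc (r i x) (r i y)) := fun z hz =>
    ⟨le_of_sum_le_sum_of_monotone hr ((le_total _ _).elim id (hx hz)) i,
      le_of_sum_le_sum_of_monotone hr ((le_total _ _).elim (hy hz) id) i⟩
  have htelescope : ∑ i, (r i y + 1 - r i x) < w + Fintype.card ι := by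
    have hle (i : ι) : r i x ≤ r i y + 1 := (hmaps i hxS).2.trans (Nat.le_succ _)
    rw [Finset.sum_tsub_distrib _ fun i _ => hle i, Finset.sum_add_distrib, Finset.sum_const,
      smul_eq_mul, mul_one, Finset.card_univ]
    obtain ⟨hxlower, hxupper⟩ := hsum x hxS
    obtain ⟨-, hyupper⟩ := hsum y hyS
    omega
  calc (⋃ i, m i '' S).encard ≤ ∑ i, (m i '' S).encard := Set.encard_iUnion_le_of_fintype _
    _ ≤ ∑ i, ((r i y + 1 - r i x : ℕ) : ℕ∞) :=
        Finset.sum_le_sum fun i _ => encard_image_le_of_factorsThrough (hmr i) (hmaps i)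
    _ = (∑ i, (r i y + 1 - r i x) : ℕ) := (Nat.cast_sum _ _).symm
    _ < (w + Fintype.card ι : ℕ) := Nat.cast_lt.2 htelescope

variable [Nonempty ι] [Nonempty X]

theorem exists_finset_forall_mem_of_sum_mem_Ico {r : ι → X → ℕ} (hr : ∀ i, Monotone (r i))
    (hmr : ∀ i, (m i).FactorsThrough (r i)) {S : Set X} {a w : ℕ} (hw : 0 < w)
    (hsum : ∀ x ∈ S, ∑ i, r i x ∈ Set.Ico a (a + w)) :
    ∃ H : Finset α, H.Nonempty ∧ (H : Set α) ⊆ ⋃ i, Set.range (m i) ∧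
      H.card < w + Fintype.card ι ∧ ∀ x ∈ S, ∀ i, m i x ∈ H := by
  obtain ⟨i⟩ := ‹Nonempty ι›
  rcases S.eq_empty_or_nonempty with rfl | ⟨x, hx⟩
  · obtain ⟨x⟩ := ‹Nonempty X›
    refine ⟨{m i x}, Finset.singleton_nonempty _, ?_, ?_, fun y hy => hy.elim⟩
    · simp
    · have hcard : 0 < Fintype.card ι := Fintype.card_pos_iff.2 ⟨i⟩
      rw [Finset.card_singleton]
      omega
  · have hcard := encard_iUnion_image_lt hr hmr ⟨x, hx⟩ hsum
    obtain ⟨H, hH⟩ := (Set.finite_of_encard_le_coe hcard.le).exists_finset_coe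
    have hmem (y : X) (hy : y ∈ S) (j : ι) : m j y ∈ H := by
      rw [← Finset.mem_coe, hH]
      exact Set.mem_iUnion_of_mem j (Set.mem_image_of_mem _ hy)
    refine ⟨H, ⟨_, hmem x hx i⟩, ?_, ?_, hmem⟩
    · exact hH ▸ Set.iUnion_mono fun j => Set.image_subset_range _ _
    · rwa [← hH, Set.encard_coe_eq_coe_finsetCard, Nat.cast_lt] at hcard

theorem exists_slabs {C : ι → ℕ} {r : ∀ i, X → Fin (C i)} (hr : ∀ i, Monotone (r i))
    (hmr : ∀ i, (m i).FactorsThrough (r i)) :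
    ∃ σ : X → Fin ((∑ i, C i) / Fintype.card ι), Monotone σ ∧
      ∀ k, ∃ H : Finset α, H.Nonempty ∧ (H : Set α) ⊆ ⋃ i, Set.range (m i) ∧
        H.card < 2 * Fintype.card ι ∧ ∀ x, σ x = k → ∀ i, m i x ∈ H := by
  set t := Fintype.card ι
  have ht : 0 < t := Fintype.card_pos
  have hmono (i : ι) : Monotone fun x => (r i x : ℕ) := Fin.val_strictMono.monotone.comp (hr i)
  have hfactor (i : ι) : (m i).FactorsThrough fun x => (r i x : ℕ) :=
    fun x y hxy => hmr i (Fin.ext hxy)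
  have hlt (x : X) : (∑ i, (r i x : ℕ)) / t < (∑ i, C i) / t := by
    have hsum : ∑ i, (r i x : ℕ) + t ≤ ∑ i, C i :=
      calc ∑ i, (r i x : ℕ) + t = ∑ i, ((r i x : ℕ) + 1) := by
            rw [Finset.sum_add_distrib, Finset.sum_const, smul_eq_mul, mul_one, Finset.card_univ]
        _ ≤ ∑ i, C i := Finset.sum_le_sum fun i _ => (r i x).isLt
    exact (Nat.add_div_right _ ht).symm.trans_le (Nat.div_le_div_right hsum)
  refine ⟨fun x => ⟨(∑ i, (r i x : ℕ)) / t, hlt x⟩, fun x y hxy => ?_, fun k => ?_⟩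
  · exact Nat.div_le_div_right (Finset.sum_le_sum fun i _ => hmono i hxy)
  · have hslab (x : X) (hx : (∑ i, (r i x : ℕ)) / t = k) :
        ∑ i, (r i x : ℕ) ∈ Set.Ico (k * t) (k * t + t) := by
      obtain ⟨hlower, hupper⟩ := (Nat.div_eq_iff ht).1 hx
      exact ⟨hlower, by omega⟩
    obtain ⟨H, hne, hsub, hcard, hmem⟩ :=
      exists_finset_forall_mem_of_sum_mem_Ico hmono hfactor ht hslab
    exact ⟨H, hne, hsub, hcard.trans_eq (two_mul t).symm,
      fun x hx => hmem x (congrArg Fin.val hx)⟩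

end Slabs

section Overlay

variable {ι : Type*} [Fintype ι] {s : ℕ} {F : ι → Finset (ℝ → ℝ)}

theorem EnvPartitionable.biUnion [Nonempty ι] {C : ι → ℕ} (hF : ∀ i, EnvPartitionable (F i) (C i))
    (hcont : ∀ i, ∀ f ∈ F i, Continuous f)
    (hagree : (Finset.univ.biUnion F : Set (ℝ → ℝ)).Pairwise
      fun f g => {x | f x = g x}.encard ≤ s) :
    EnvPartitionable (Finset.univ.biUnion F)
      ((∑ i, C i) / Fintype.card ι * lambdaDS s (2 * Fintype.card ι - 1)) := by
  choose r m hm hr hmr using fun i => (hF i).exists_isMinSelection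
  obtain ⟨σ, hσ, hslab⟩ := exists_slabs hr hmr
  choose H hHne hHm hHcard hmH using hslab
  have hHG (k) : H k ⊆ Finset.univ.biUnion F := by
    refine Finset.coe_subset.1 ((hHm k).trans (Set.iUnion_subset fun i => ?_))
    exact Set.range_subset_iff.2 fun x =>
      Finset.mem_biUnion.2 ⟨i, Finset.mem_univ i, (hm i x).1⟩
  have hH (k) : EnvPartitionable (H k) (lambdaDS s (2 * Fintype.card ι - 1)) := by
    refine envPartitionable_lambdaDS (hHne k) (fun f hf => ?_)
      (hagree.mono (Finset.coe_subset.2 (hHG k))) (Nat.le_sub_one_of_lt (hHcard k))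
    obtain ⟨i, -, hi⟩ := Finset.mem_biUnion.1 (hHG k hf)
    exact hcont i f hi
  have hmin (x : ℝ) (f : ℝ → ℝ) (hf : f ∈ Finset.univ.biUnion F) :
      ∃ h ∈ H (σ x), h x ≤ f x := by
    obtain ⟨i, -, hi⟩ := Finset.mem_biUnion.1 hf
    exact ⟨m i x, hmH _ x rfl i, (hm i x).2 f hi⟩
  simpa only [Fintype.card_fin] using
    EnvPartitionable.glue (fun k => Set.ordConnected_singleton.preimage_mono hσ) hHG hmin hH

theorem envelope_of_envelopes_complexity_general (hne : ∀ i, (F i).Nonempty)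
    (hcont : ∀ i, ∀ f ∈ F i, Continuous f)
    (hagree : (Finset.univ.biUnion F : Set (ℝ → ℝ)).Pairwise
      fun f g => {x | f x = g x}.encard ≤ s) :
    Fintype.card ι * envComplexity (Finset.univ.biUnion F) ≤
      (∑ i, envComplexity (F i)) * lambdaDS s (2 * Fintype.card ι - 1) := by
  rcases isEmpty_or_nonempty ι with hι | hι
  · simp
  have hF (i : ι) : EnvPartitionable (F i) (envComplexity (F i)) :=
    (envPartitionable_lambdaDS (hne i) (hcont i)
      (hagree.mono (Finset.coe_subset.2 (Finset.subset_biUnion_of_mem F (Finset.mem_univ i))))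
      le_rfl).envComplexity
  calc Fintype.card ι * envComplexity (Finset.univ.biUnion F)
      ≤ Fintype.card ι * ((∑ i, envComplexity (F i)) / Fintype.card ι *
          lambdaDS s (2 * Fintype.card ι - 1)) := by
        gcongr
        exact Nat.sInf_le (EnvPartitionable.biUnion hF hcont hagree)
    _ ≤ (∑ i, envComplexity (F i)) * lambdaDS s (2 * Fintype.card ι - 1) := by
        rw [← mul_assoc]
        gcongr
        exact Nat.mul_div_le _ _

end Overlay

/-- The lower envelope of `t` overlaid lower envelopes: if `F_1, …, F_t` are finite
nonempty disjoint families of continuous functions `ℝ → ℝ`, any two distinct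
functions of their union agreeing in at most `s` points, and `C_i` is the
complexity of the lower envelope of `F_i`, then the complexity `M` of the lower
envelope of the union satisfies `t * M ≤ (C_1 + ⋯ + C_t) * λ_s(3t)`. -/
theorem envelope_of_envelopes_complexity
    (s t : ℕ) (hs : 1 ≤ s)
    (F : Fin t → Finset (ℝ → ℝ))
    (hne : ∀ i, (F i).Nonempty)
    (hcont : ∀ i, ∀ f ∈ F i, Continuous f)
    (hdisj : ∀ i j : Fin t, i ≠ j → Disjoint (F i) (F j))
    (hagree : ∀ f ∈ Finset.univ.biUnion F, ∀ g ∈ Finset.univ.biUnion F, f ≠ g →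
      {x : ℝ | f x = g x}.Finite ∧ {x : ℝ | f x = g x}.ncard ≤ s) :
    t * envComplexity (Finset.univ.biUnion F) ≤
      (∑ i : Fin t, envComplexity (F i)) * lambdaDS s (3 * t) := by
  have hsharp := envelope_of_envelopes_complexity_general hne hcont fun f hf g hg hfg =>
    Set.encard_le_coe_iff_finite_ncard_le.2 (hagree f hf g hg hfg)
  rw [Fintype.card_fin] at hsharp
  exact hsharp.trans (Nat.mul_le_mul_left _ (lambdaDS_mono s (by omega)))
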